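/- arXiv:math/0611796 — 3 statements merged into one kernel-verified Lean document; each statement's English description precedes it below -/
import Mathlib

section
/- Fix an integer r and let m = 2r+1. Consider the action of the unitary group U(2) on ℂ² given by g·v = (det g)^r (g v) (this is the underlying real 4-dimensional sphere-transitive representation [Σ¹⊗(A^m ⊕ A^{−m})] of U(2)). Then: (i) this action is transitive on the unit sphere {v ∈ ℂ² : ‖v‖ = 1}; and (ii) the stabilizer of the point (1,0) is exactly the circle subgroup {diag(e^{−irt}, e^{i(r+1)t}) : t ∈ ℝ} of U(2). -/
open Matrix Complex

/-- The action of `U(2)` on `ℂ²` given by `g · v = (det g)^r • (g v)`; for `m = 2r+1` this is the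
real `4`-dimensional representation `[Σ¹ ⊗ (A^m ⊕ A^{-m})]` of `U(2)`. -/
noncomputable def actU2 (r : ℤ) (g : Matrix.unitaryGroup (Fin 2) ℂ)
    (v : EuclideanSpace ℂ (Fin 2)) : EuclideanSpace ℂ (Fin 2) :=
  (WithLp.equiv 2 (Fin 2 → ℂ)).symm
    (((g : Matrix (Fin 2) (Fin 2) ℂ).det ^ r) •
      (g : Matrix (Fin 2) (Fin 2) ℂ).mulVec ((WithLp.equiv 2 (Fin 2 → ℂ)) v))

/-!
Transitivity already holds for the subgroup `SU(2)`, on which the twist `(det g)^r` is trivial: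
for a unit vector `v = (a, b)` the quaternion matrix `S(v)` with columns `(a, b)` and `(-b̄, ā)`
lies in `SU(2)` and sends `(1, 0)` to `v`, so `S(w) S(v)*` sends `v` to `w`.

For the stabilizer, put `d = det g`. If `g` fixes `(1, 0)`, its first column is `(d^{-r}, 0)`, and
unitarity then forces `g` to be diagonal, so its other diagonal entry is `d / d^{-r} = d^{r+1}`.
Since `|d| = 1`, one may write `d = e^{it}`.
-/

section SpecialUnitary

/-- The matrix `S(v)` over a ring with involution: the usual complex `2 × 2` matrix form of a
quaternion, parametrized by its first column `v` so that unit vectors give elements of `SU(2)`. -/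
def quaternionMatrix {R : Type*} [Neg R] [Star R] (v : Fin 2 → R) : Matrix (Fin 2) (Fin 2) R :=
  !![v 0, -star (v 1); v 1, star (v 0)]

variable {R : Type*} [CommRing R] [StarRing R]

lemma quaternionMatrix_mulVec_single (v : Fin 2 → R) :
    quaternionMatrix v *ᵥ Pi.single 0 1 = v := by
  ext i
  fin_cases i <;> simp [quaternionMatrix]

lemma det_quaternionMatrix (v : Fin 2 → R) : (quaternionMatrix v).det = v ⬝ᵥ star v := by
  rw [quaternionMatrix, det_fin_two_of, dotProduct, Fin.sum_univ_two, Pi.star_apply, Pi.star_apply]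
  ring

lemma quaternionMatrix_mul_star (v : Fin 2 → R) :
    quaternionMatrix v * star (quaternionMatrix v) = (v ⬝ᵥ star v) • 1 := by
  have hstar : star (quaternionMatrix v) = !![star (v 0), star (v 1); -v 1, v 0] := by
    ext i j
    fin_cases i <;> fin_cases j <;> simp [quaternionMatrix, star_apply]
  have hdot : v ⬝ᵥ star v = v 0 * star (v 0) + v 1 * star (v 1) := Fin.sum_univ_two _
  rw [hstar, hdot, quaternionMatrix, mul_fin_two, one_fin_two, smul_of]
  ext i j
  fin_cases i <;> fin_cases j <;> simp [mul_comm, add_comm]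

lemma quaternionMatrix_mem_specialUnitaryGroup {v : Fin 2 → R} (hv : v ⬝ᵥ star v = 1) :
    quaternionMatrix v ∈ specialUnitaryGroup (Fin 2) R := by
  rw [mem_specialUnitaryGroup_iff, mem_unitaryGroup_iff, quaternionMatrix_mul_star,
    det_quaternionMatrix, hv, one_smul]
  exact ⟨rfl, rfl⟩

lemma exists_mem_specialUnitaryGroup_mulVec_eq {v w : Fin 2 → R} (hv : v ⬝ᵥ star v = 1)
    (hw : w ⬝ᵥ star w = 1) : ∃ g ∈ specialUnitaryGroup (Fin 2) R, g *ᵥ v = w := by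
  let S (u : Fin 2 → R) (hu : u ⬝ᵥ star u = 1) : specialUnitaryGroup (Fin 2) R :=
    ⟨quaternionMatrix u, quaternionMatrix_mem_specialUnitaryGroup hu⟩
  have hv_base : star (quaternionMatrix v) *ᵥ v = Pi.single 0 1 := by
    nth_rw 2 [← quaternionMatrix_mulVec_single v]
    rw [mulVec_mulVec, mem_unitaryGroup_iff'.1 (S v hv).2.1, one_mulVec]
  refine ⟨S w hw * star (S v hv), (S w hw * star (S v hv)).2, ?_⟩
  rw [specialUnitaryGroup.coe_star, ← mulVec_mulVec, hv_base, quaternionMatrix_mulVec_single]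

end SpecialUnitary

section Diagonal

lemma row_eq_zero_of_col_eq_zero_of_mem_unitaryGroup {n R : Type*} [Fintype n] [DecidableEq n]
    [CommRing R] [StarRing R] {g : Matrix n n R} (hg : g ∈ unitaryGroup n R) {j : n}
    (hcol : ∀ i ≠ j, g i j = 0) {k : n} (hk : k ≠ j) : g j k = 0 := by
  have hentry (l : n) : star (g j j) * g j l = (1 : Matrix n n R) j l := by
    rw [← mem_unitaryGroup_iff'.1 hg, mul_apply, Finset.sum_eq_single j] <;>
      simp +contextual [star_apply, hcol]
  have hunit : IsUnit (star (g j j)) := .of_mul_eq_one (g j j) (by simpa using hentry j)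
  exact hunit.mul_right_eq_zero.1 (by rw [hentry k, one_apply_ne hk.symm])

variable {K : Type*} [Field K]

lemma det_diagonal_zpow_neg_zpow_add_one {z : K} (hz : z ≠ 0) (r : ℤ) :
    (diagonal ![z ^ (-r), z ^ (r + 1)]).det = z := by
  rw [det_diagonal, Fin.prod_univ_two, cons_val_zero, cons_val_one, cons_val_zero,
    ← zpow_add₀ hz, neg_add_cancel_left, zpow_one]

lemma det_zpow_smul_mulVec_single_eq_single_iff [StarRing K] {g : Matrix (Fin 2) (Fin 2) K}
    (hg : g ∈ unitaryGroup (Fin 2) K) (r : ℤ) :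
    g.det ^ r • g *ᵥ Pi.single 0 1 = Pi.single 0 1 ↔
      g = diagonal ![g.det ^ (-r), g.det ^ (r + 1)] := by
  have hdet : g.det ≠ 0 := (UnitaryGroup.det_isUnit ⟨g, hg⟩).ne_zero
  have hpow : g.det ^ r ≠ 0 := zpow_ne_zero r hdet
  constructor
  · intro hfix
    have h00_mul : g.det ^ r * g 0 0 = 1 := by simpa using congrFun hfix 0
    have h00 : g 0 0 = g.det ^ (-r) := by
      rw [_root_.zpow_neg, eq_inv_of_mul_eq_one_right h00_mul]
    have h10 : g 1 0 = 0 := by simpa [hpow] using congrFun hfix 1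
    have h01 : g 0 1 = 0 :=
      row_eq_zero_of_col_eq_zero_of_mem_unitaryGroup hg (by simp [Fin.forall_fin_two, h10])
        one_ne_zero
    have h11 : g 1 1 = g.det ^ (r + 1) := calc
      g 1 1 = g.det ^ r * (g 0 0 * g 1 1) := by rw [← mul_assoc, h00_mul, one_mul]
      _ = g.det ^ r * g.det := by rw [det_fin_two g, h10, mul_zero, sub_zero]
      _ = g.det ^ (r + 1) := (zpow_add_one₀ hdet r).symm
    ext i j
    fin_cases i <;> fin_cases j <;> simp [← h00, ← h11, h01, h10]
  · intro hdiag
    have hcol : g *ᵥ Pi.single 0 1 = Pi.single 0 (g.det ^ (-r)) := by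
      rw [hdiag, diagonal_mulVec_single, ← hdiag]
      simp
    rw [hcol, ← Pi.single_smul, smul_eq_mul, _root_.zpow_neg, mul_inv_cancel₀ hpow]

end Diagonal

lemma dotProduct_star_self_eq_one_of_norm_eq_one {𝕜 ι : Type*} [RCLike 𝕜] [Fintype ι]
    {v : EuclideanSpace 𝕜 ι} (hv : ‖v‖ = 1) : v.ofLp ⬝ᵥ star v.ofLp = 1 := by
  rw [← EuclideanSpace.inner_eq_star_dotProduct, inner_self_eq_one_of_norm_eq_one hv]

lemma exists_actU2_eq (r : ℤ) {v w : EuclideanSpace ℂ (Fin 2)} (hv : ‖v‖ = 1) (hw : ‖w‖ = 1) :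
    ∃ g : unitaryGroup (Fin 2) ℂ, actU2 r g v = w := by
  obtain ⟨g, hg, hgv⟩ := exists_mem_specialUnitaryGroup_mulVec_eq
    (dotProduct_star_self_eq_one_of_norm_eq_one hv) (dotProduct_star_self_eq_one_of_norm_eq_one hw)
  obtain ⟨hgU, hdet⟩ := mem_specialUnitaryGroup_iff.1 hg
  exact ⟨⟨g, hgU⟩, by simp [actU2, hdet, hgv]⟩

lemma actU2_single_eq_single_iff (r : ℤ) (g : unitaryGroup (Fin 2) ℂ) :
    actU2 r g (EuclideanSpace.single 0 1) = EuclideanSpace.single 0 1 ↔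
      (g : Matrix (Fin 2) (Fin 2) ℂ) =
        diagonal ![(g : Matrix (Fin 2) (Fin 2) ℂ).det ^ (-r),
          (g : Matrix (Fin 2) (Fin 2) ℂ).det ^ (r + 1)] := by
  rw [← det_zpow_smul_mulVec_single_eq_single_iff g.2 r]
  exact (WithLp.ofLp_injective 2).eq_iff.symm

lemma diagonal_exp_eq_diagonal_zpow (r : ℤ) (t : ℂ) :
    diagonal ![exp (-((r : ℂ) * t) * I), exp (((r : ℂ) + 1) * t * I)] =
      diagonal ![exp (t * I) ^ (-r), exp (t * I) ^ (r + 1)] := by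
  simp only [← exp_int_mul]
  push_cast
  ring_nf

/-- The representation `g · v = (det g)^r (g v)` of `U(2)` on `ℂ²` is transitive on the unit
sphere, and the stabilizer of `(1,0)` is the circle subgroup
`{diag(e^{-irt}, e^{i(r+1)t}) : t ∈ ℝ}`. -/
theorem actU2_sphere_transitive_and_stabilizer (r : ℤ) :
    (∀ v w : EuclideanSpace ℂ (Fin 2), ‖v‖ = 1 → ‖w‖ = 1 →
      ∃ g : Matrix.unitaryGroup (Fin 2) ℂ, actU2 r g v = w) ∧
    (∀ g : Matrix.unitaryGroup (Fin 2) ℂ,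
      actU2 r g (EuclideanSpace.single 0 1) = EuclideanSpace.single 0 1 ↔
        ∃ t : ℝ, (g : Matrix (Fin 2) (Fin 2) ℂ) =
          Matrix.diagonal ![Complex.exp (-((r : ℂ) * (t : ℝ)) * Complex.I),
            Complex.exp (((r : ℂ) + 1) * (t : ℝ) * Complex.I)]) := by
  refine ⟨fun v w hv hw => exists_actU2_eq r hv hw, fun g => ?_⟩
  simp only [actU2_single_eq_single_iff, diagonal_exp_eq_diagonal_zpow]
  constructor
  · intro hg
    have hnorm : ‖(g : Matrix (Fin 2) (Fin 2) ℂ).det‖ = 1 :=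
      CStarRing.norm_of_mem_unitary (det_of_mem_unitary g.2)
    obtain ⟨t, ht⟩ := (norm_eq_one_iff _).1 hnorm
    exact ⟨t, by rwa [ht]⟩
  · rintro ⟨t, ht⟩
    rw [ht, det_diagonal_zpow_neg_zpow_add_one (exp_ne_zero _)]
end

section
/- Let p, q be integers with (p,q) ≠ (0,0), and let h = gcd(p,q). Let φ : circle × circle → circle be the continuous group homomorphism φ(z,w) = z^p · w^q. Then the kernel of φ is isomorphic, as a topological group, to circle × ZMod h. (This is the statement that the generic stabilizer of the 2-torus representation A^p ⊗ A^q is U(1) × ℤ_h.) -/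
/-!
Writing `(p, q) = h • (a, b)` with `a`, `b` coprime, `(a, b)` is the second row of a matrix in
`SL(2, ℤ)`, and the automorphism of the torus given by this matrix turns `z ^ p * w ^ q` into the
`h`-th power of the second coordinate. The kernel is therefore the product of one factor of the
torus with the `h`-torsion of the other. The torsion is cyclic of order `h`, and finite, hence
discrete.
-/

/-- The homomorphism `circle × circle → circle`, `(z, w) ↦ z^p · w^q`. -/
noncomputable def phiCircle (p q : ℤ) : Circle × Circle →* Circle where
  toFun zw := zw.1 ^ p * zw.2 ^ q
  map_one' := by simp
  map_mul' x y := by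
    simp only [Prod.fst_mul, Prod.snd_mul, mul_zpow]
    exact mul_mul_mul_comm _ _ _ _

open scoped MatrixGroups

section MonomialMap

variable {G : Type*} [CommGroup G]

/-- The monomial map `(z, w) ↦ (z ^ A₀₀ * w ^ A₀₁, z ^ A₁₀ * w ^ A₁₁)` of an integer matrix `A`,
which is multiplication by `A` on column vectors, written multiplicatively. -/
def monomialMap (A : Matrix (Fin 2) (Fin 2) ℤ) : G × G →* G × G :=
  ((zpowGroupHom (A 0 0)).coprod (zpowGroupHom (A 0 1))).prod
    ((zpowGroupHom (A 1 0)).coprod (zpowGroupHom (A 1 1)))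

lemma monomialMap_apply (A : Matrix (Fin 2) (Fin 2) ℤ) (x : G × G) :
    monomialMap A x = (x.1 ^ A 0 0 * x.2 ^ A 0 1, x.1 ^ A 1 0 * x.2 ^ A 1 1) :=
  rfl

lemma monomialMap_one_apply (x : G × G) : monomialMap 1 x = x := by
  simp [monomialMap_apply]

lemma monomialMap_mul_apply (A B : Matrix (Fin 2) (Fin 2) ℤ) (x : G × G) :
    monomialMap (A * B) x = monomialMap A (monomialMap B x) := by
  ext <;>
  · simp only [monomialMap_apply, Matrix.mul_apply, Fin.sum_univ_two, zpow_add, mul_zpow,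
      ← zpow_mul, mul_comm (B _ _)]
    exact mul_mul_mul_comm _ _ _ _

variable [TopologicalSpace G] [IsTopologicalGroup G]

lemma continuous_monomialMap (A : Matrix (Fin 2) (Fin 2) ℤ) :
    Continuous (monomialMap A : G × G →* G × G) :=
  ((continuous_fst.zpow _).mul (continuous_snd.zpow _)).prodMk
    ((continuous_fst.zpow _).mul (continuous_snd.zpow _))

/-- The automorphism of the topological group `G × G` given by the monomial map of a matrix in
`SL(2, ℤ)`. -/
def monomialEquiv (A : SL(2, ℤ)) : G × G ≃ₜ* G × G where
  toFun := monomialMap A.1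
  invFun := monomialMap A⁻¹.1
  left_inv x := by
    rw [← monomialMap_mul_apply, ← Matrix.SpecialLinearGroup.coe_mul, inv_mul_cancel,
      Matrix.SpecialLinearGroup.coe_one, monomialMap_one_apply]
  right_inv x := by
    rw [← monomialMap_mul_apply, ← Matrix.SpecialLinearGroup.coe_mul, mul_inv_cancel,
      Matrix.SpecialLinearGroup.coe_one, monomialMap_one_apply]
  map_mul' := map_mul (monomialMap A.1)
  continuous_toFun := continuous_monomialMap A.1
  continuous_invFun := continuous_monomialMap A⁻¹.1

lemma monomialEquiv_apply_snd (A : SL(2, ℤ)) (x : G × G) :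
    (monomialEquiv A x).2 = x.1 ^ A 1 0 * x.2 ^ A 1 1 :=
  rfl

end MonomialMap

lemma exists_SL2_row_one_mul_gcd (p q : ℤ) :
    ∃ A : SL(2, ℤ), p = A 1 0 * p.gcd q ∧ q = A 1 1 * p.gcd q := by
  obtain ⟨a, b, hp, hq, hab⟩ := extract_gcd p q
  obtain ⟨A, rfl, rfl⟩ := ((gcd_isUnit_iff a b).mp hab).exists_SL2_row 1
  rw [← Int.coe_gcd, mul_comm] at hp hq
  exact ⟨A, hp, hq⟩

/-- If a topological isomorphism `e : H ≃ₜ* K × L` turns `f` into `g` applied to the second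
coordinate, then it restricts to an isomorphism of the kernel of `f` with `K × g.ker`. -/
def kerEquivProdKer {H K L M : Type*} [Group H] [Group K] [Group L] [MulOneClass M]
    [TopologicalSpace H] [TopologicalSpace K] [TopologicalSpace L] (e : H ≃ₜ* K × L)
    (f : H →* M) (g : L →* M) (hfg : ∀ x, f x = g (e x).2) : f.ker ≃ₜ* K × g.ker where
  toFun x := ((e x).1, ⟨(e x).2, by rw [MonoidHom.mem_ker, ← hfg, x.2]⟩)
  invFun y := ⟨e.symm (y.1, y.2), by
    rw [MonoidHom.mem_ker, hfg, e.apply_symm_apply, y.2.2]⟩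
  left_inv x := by simp
  right_inv y := by simp
  map_mul' x y := by ext <;> simp
  continuous_toFun := by fun_prop
  continuous_invFun := by fun_prop

theorem nonempty_ker_zpow_coprod_zpow_equiv {G : Type*} [CommGroup G] [TopologicalSpace G]
    [IsTopologicalGroup G] (p q : ℤ) :
    Nonempty (((zpowGroupHom p).coprod (zpowGroupHom q) : G × G →* G).ker ≃ₜ*
      G × (powMonoidHom (p.gcd q) : G →* G).ker) := by
  obtain ⟨A, hp, hq⟩ := exists_SL2_row_one_mul_gcd p q
  refine ⟨kerEquivProdKer (monomialEquiv A) _ _ fun x => ?_⟩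
  calc x.1 ^ p * x.2 ^ q
      = x.1 ^ (A 1 0 * p.gcd q) * x.2 ^ (A 1 1 * p.gcd q) := by rw [← hp, ← hq]
    _ = (monomialEquiv A x).2 ^ p.gcd q := by
      rw [monomialEquiv_apply_snd, zpow_mul, zpow_mul, ← mul_zpow, zpow_natCast]

section Torsion

variable (G : Type*) [CommGroup G] (n : ℕ)

/-- The `n`-torsion of a commutative group as the group of `n`-th roots of unity, which Mathlib
defines inside the group of units. -/
def kerPowEquivRootsOfUnity : (powMonoidHom n : G →* G).ker ≃* rootsOfUnity n G :=
  (toUnits.subgroupMap _).trans <| MulEquiv.subgroupCongr <| by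
    ext ζ
    refine Subgroup.mem_map_equiv.trans ?_
    rw [MonoidHom.mem_ker, powMonoidHom_apply, ← map_pow,
      EmbeddingLike.map_eq_one_iff, mem_rootsOfUnity]

variable [NeZero n] [HasEnoughRootsOfUnity G n]

/-- The `n`-torsion of a group with a full set of `n`-th roots of unity is cyclic of order `n`. The
isomorphism depends on the choice of a generator. -/
noncomputable def kerPowEquivZMod :
    (powMonoidHom n : G →* G).ker ≃* Multiplicative (ZMod n) :=
  (kerPowEquivRootsOfUnity G n).trans <| mulEquivOfCyclicCardEq <| by
    rw [HasEnoughRootsOfUnity.natCard_rootsOfUnity, Nat.card_congr Multiplicative.toAdd,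
      Nat.card_zmod]

/-- The isomorphism `kerPowEquivZMod` is one of topological groups, because a finite `T₁` space is
discrete. -/
noncomputable def kerPowContinuousEquivZMod [TopologicalSpace G] [T1Space G] :
    (powMonoidHom n : G →* G).ker ≃ₜ* Multiplicative (ZMod n) :=
  have : Finite (powMonoidHom n : G →* G).ker := .of_equiv _ (kerPowEquivZMod G n).symm.toEquiv
  { kerPowEquivZMod G n with
    continuous_toFun := continuous_of_discreteTopology
    continuous_invFun := continuous_of_discreteTopology }

end Torsion

theorem ker_phiCircle_iso_general {G : Type*} [CommGroup G] [TopologicalSpace G]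
    [IsTopologicalGroup G] [T0Space G] (p q : ℤ) [NeZero (p.gcd q)]
    [HasEnoughRootsOfUnity G (p.gcd q)] :
    Nonempty (((zpowGroupHom p).coprod (zpowGroupHom q) : G × G →* G).ker ≃ₜ*
      G × Multiplicative (ZMod (p.gcd q))) := by
  obtain ⟨e⟩ := nonempty_ker_zpow_coprod_zpow_equiv (G := G) p q
  let e' := kerPowContinuousEquivZMod G (p.gcd q)
  exact ⟨e.trans
    { (MulEquiv.refl G).prodCongr e'.toMulEquiv with
      continuous_toFun := continuous_id.prodMap e'.continuous
      continuous_invFun := continuous_id.prodMap e'.symm.continuous }⟩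

/-- The generic stabilizer of the `2`-torus representation `A^p ⊗ A^q` is `U(1) × ℤ_h` with
`h = gcd(p,q)`: the kernel of `(z,w) ↦ z^p w^q` is topologically isomorphic to
`circle × ZMod (gcd p q)`. -/
theorem ker_phiCircle_iso (p q : ℤ) (hpq : (p, q) ≠ (0, 0)) :
    letI : TopologicalSpace (Multiplicative (ZMod (Int.gcd p q))) := ⊥
    ∃ e : (phiCircle p q).ker ≃* Circle × Multiplicative (ZMod (Int.gcd p q)),
      Continuous e ∧ Continuous e.symm := by
  have : NeZero (p.gcd q) := ⟨by simpa [Int.gcd_eq_zero_iff] using hpq⟩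
  obtain ⟨e⟩ := ker_phiCircle_iso_general (G := Circle) p q
  exact ⟨e.toMulEquiv, e.continuous, e.symm.continuous⟩
end

section
/- Let n be a natural number and let A be an invertible n×n complex matrix. Then A·Ā = 1 if and only if there exists an invertible n×n complex matrix B with A = B·(B̄)⁻¹. In other words, the preimage Γ⁻¹(I) of the identity under the map Γ(A) = A·Ā on GL(n,ℂ) coincides with the consimilarity orbit {B·B̄⁻¹ : B ∈ GL(n,ℂ)} of the identity. -/
open Matrix

/-!
The argument is Galois descent for an involution of the scalars. If `A Ā = 1`, then `v ↦ A v̄` is a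
semilinear involution, so it fixes `c • x + c̄ • A x̄` for every scalar `c` and vector `x`. Combining
these vectors for some `c ≠ c̄` and for `1` recovers `x`, so the fixed vectors span the space, and an
invertible matrix `B` whose columns are fixed vectors satisfies `A B̄ = B`. Conversely, conjugating
`A B̄ = B` gives `Ā B = B̄`, whence `A Ā B = B`, and `B` cancels.
-/

section CommSemiring

variable {m n R : Type*} [Fintype m] [CommSemiring R] [StarRing R]

lemma map_starRingEnd_mul_eq_of_mul_map_starRingEnd_eq {A : Matrix m m R} {B : Matrix m n R}
    (h : A * B.map (starRingEnd R) = B) :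
    A.map (starRingEnd R) * B = B.map (starRingEnd R) := by
  have hB : (B.map (starRingEnd R)).map (starRingEnd R) = B := by
    ext i j
    simp only [map_apply, starRingEnd_self_apply]
  simpa only [Matrix.map_mul, hB] using congrArg (·.map (starRingEnd R)) h

lemma mul_map_starRingEnd_eq_one_of_isUnit [DecidableEq m] {A B : Matrix m m R} (hB : IsUnit B)
    (h : A * B.map (starRingEnd R) = B) :
    A * A.map (starRingEnd R) = 1 :=
  hB.mul_right_cancel <| by
    rw [mul_assoc, map_starRingEnd_mul_eq_of_mul_map_starRingEnd_eq h, h, one_mul]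

lemma mul_map_starRingEnd_eq_iff_forall_col {A : Matrix m m R} {B : Matrix m n R} :
    A * B.map (starRingEnd R) = B ↔ ∀ j, A *ᵥ star (B.col j) = B.col j :=
  ⟨fun h j ↦ funext fun i ↦ congrFun₂ h i j, fun h ↦ ext fun i j ↦ congrFun (h j) i⟩

lemma star_mulVec_eq_map_starRingEnd_mulVec_star (A : Matrix n m R) (v : m → R) :
    star (A *ᵥ v) = A.map (starRingEnd R) *ᵥ star v :=
  funext fun i ↦ (starRingEnd R).map_mulVec A v i

lemma mulVec_star_smul_add_smul_mulVec_star [DecidableEq m] {A : Matrix m m R}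
    (hA : A * A.map (starRingEnd R) = 1) (c : R) (x : m → R) :
    A *ᵥ star (c • x + star c • A *ᵥ star x) = c • x + star c • A *ᵥ star x := by
  rw [star_add, star_smul, star_smul, star_star, star_mulVec_eq_map_starRingEnd_mulVec_star,
    star_star, mulVec_add, mulVec_smul, mulVec_smul, mulVec_mulVec, hA, one_mulVec, add_comm]

end CommSemiring

section CommRing

variable {m R : Type*} [Fintype m] [DecidableEq m] [CommRing R] [StarRing R] {A B : Matrix m m R}

lemma eq_mul_inv_map_starRingEnd_iff (hB : IsUnit B) :
    A = B * (B.map (starRingEnd R))⁻¹ ↔ A * B.map (starRingEnd R) = B := by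
  have hdet : IsUnit (B.map (starRingEnd R)).det :=
    (isUnit_iff_isUnit_det _).1 (hB.map (starRingEnd R).mapMatrix)
  constructor
  · rintro rfl
    exact nonsing_inv_mul_cancel_right _ B hdet
  · intro h
    rw [← mul_nonsing_inv_cancel_right _ A hdet, h]

lemma span_mulVec_star_eq_self_eq_top (hA : A * A.map (starRingEnd R) = 1) {c : R}
    (hc : IsUnit (c - star c)) :
    Submodule.span R {v | A *ᵥ star v = v} = ⊤ := by
  refine Submodule.eq_top_iff'.2 fun x ↦ ?_
  have hmem (d : R) :
      d • x + star d • A *ᵥ star x ∈ Submodule.span R {v | A *ᵥ star v = v} :=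
    Submodule.subset_span (mulVec_star_smul_add_smul_mulVec_star hA d x)
  have hx : (c - star c) • x =
      (c • x + star c • A *ᵥ star x) - star c • ((1 : R) • x + star (1 : R) • A *ᵥ star x) := by
    rw [star_one]
    module
  rw [← Submodule.smul_mem_iff_of_isUnit _ hc, hx]
  exact sub_mem (hmem c) (Submodule.smul_mem _ _ (hmem 1))

end CommRing

section Field

variable {m K : Type*} [Fintype m] [DecidableEq m] [Field K]

lemma exists_isUnit_forall_col_mem_of_span_eq_top {s : Set (m → K)}
    (hs : Submodule.span K s = ⊤) :
    ∃ B : Matrix m m K, IsUnit B ∧ ∀ j, B.col j ∈ s := by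
  let b := Module.Basis.ofSpan hs.ge
  let e := b.indexEquiv (Pi.basisFun K m)
  refine ⟨(of fun j ↦ b (e.symm j))ᵀ, ?_, fun j ↦ ?_⟩
  · exact linearIndependent_cols_iff_isUnit.1 (b.linearIndependent.comp e.symm e.symm.injective)
  · exact Module.Basis.ofSpan_subset hs.ge ⟨e.symm j, rfl⟩

theorem consimilarity_orbit_of_identity_general [StarRing K] {c : K} (hc : star c ≠ c)
    (A : Matrix m m K) :
    A * A.map (starRingEnd K) = 1 ↔
      ∃ B : Matrix m m K, IsUnit B ∧ A = B * (B.map (starRingEnd K))⁻¹ := by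
  constructor
  · intro hA
    have hspan : Submodule.span K {v | A *ᵥ star v = v} = ⊤ :=
      span_mulVec_star_eq_self_eq_top hA (sub_ne_zero.2 hc.symm).isUnit
    obtain ⟨B, hB, hfixed⟩ := exists_isUnit_forall_col_mem_of_span_eq_top hspan
    exact ⟨B, hB, (eq_mul_inv_map_starRingEnd_iff hB).2
      (mul_map_starRingEnd_eq_iff_forall_col.2 hfixed)⟩
  · rintro ⟨B, hB, h⟩
    exact mul_map_starRingEnd_eq_one_of_isUnit hB ((eq_mul_inv_map_starRingEnd_iff hB).1 h)

end Field

/-- For an invertible complex matrix `A`, `A·Ā = 1` iff `A = B·(B̄)⁻¹` for some invertible `B`: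
the preimage of the identity under `Γ(A) = A·Ā` is the consimilarity orbit of the identity. -/
theorem consimilarity_orbit_of_identity (n : ℕ) (A : Matrix (Fin n) (Fin n) ℂ)
    (hA : IsUnit A) :
    A * A.map (starRingEnd ℂ) = 1 ↔
      ∃ B : Matrix (Fin n) (Fin n) ℂ, IsUnit B ∧ A = B * (B.map (starRingEnd ℂ))⁻¹ :=
  consimilarity_orbit_of_identity_general (c := Complex.I)
    (fun h ↦ one_ne_zero (Complex.conj_eq_iff_im.1 h)) A
end
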